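/- Let m be an odd positive integer, F = 𝔽_{2^m}, and suppose the power function f : F → F, f(x) = x^d (for a positive integer d), is crooked. Then there exist natural numbers j < k with gcd(k − j, m) = 1 such that x^d = x^{2^k + 2^j} for all x ∈ F. -/

import Mathlib

/-- `f` is crooked: `f 0 = 0`; `f x + f y + f z ≠ f (x+y+z)` for pairwise
distinct `x, y, z`; and `f x + f y + f z ≠ f (x+a) + f (y+a) + f (z+a)`
for every `a ≠ 0`. -/
def IsCrooked {F : Type*} [Field F] (f : F → F) : Prop :=
  f 0 = 0 ∧
  (∀ x y z : F, x ≠ y → x ≠ z → y ≠ z → f x + f y + f z ≠ f (x + y + z)) ∧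
  (∀ x y z a : F, a ≠ 0 → f x + f y + f z ≠ f (x + a) + f (y + a) + f (z + a))

/-!
Let `f x = x ^ d` be crooked on `F = 𝔽_{2^m}`. The image `H` of `x ↦ f (x + 1) - f x` is sum-free,
contains exactly half of `F`, contains `1` and is stable under squaring. Hence its complement
`1 + H` is the set of all `v + v ^ 2`, whose elements have absolute trace zero.

Write the exponent in binary, `d = ∑ s ∈ S, 2 ^ s` with `S ⊆ ℤ/m`. Then `1 + f (x + 1) - f x` is
the sum of the monomials attached to the nonempty proper subsets of `S`, and Frobenius translates
these subsets. Since the `2 ^ m` reduced monomials are linearly independent, vanishing of the trace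
says that for each `U` with `0 < |U| < |S|` the number of translates of `U` inside `S` is even.

As `f` is injective, `S` has no nonzero period, which forces `|S| ≤ 2`: if `|S| ≥ 3`, then `|S|` is
even (take `U` a point), some `g ≠ 0` translates `S \ {u}` into `S` (take `U = S \ {u}`), and since
`g + u ∉ S`, exactly the `|S| - 1` translates of `{0, g}` by `S \ {u}` lie in `S`, an odd number.

Finally, if `gcd (k - j) m > 1` there is `a ≠ 0, 1` with `a ^ 2 ^ (k - j) = a`, for which
`f (a + 1) = f a + f 1`, contradicting crookedness.
-/

open Finset
open scoped Pointwise fwdDiff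

section FiniteSets

theorem two_mul_card_image_of_fiber_eq_pair {α β : Type*} [Fintype α] [DecidableEq β] {g : α → β}
    {σ : α → α} (hσ : ∀ x, σ x ≠ x) (hg : ∀ x y, g y = g x ↔ y = x ∨ y = σ x) :
    2 * #(univ.image g) = Fintype.card α := by
  classical
  have card_fiber : ∀ b ∈ univ.image g, #{a | g a = b} = 2 := by
    intro b hb
    obtain ⟨x, -, rfl⟩ := mem_image.1 hb
    have fiber_eq : ({a | g a = g x} : Finset α) = {x, σ x} := by ext y; simp [hg x y]
    rw [fiber_eq, card_pair (hσ x).symm]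
  rw [← card_univ, card_eq_sum_card_image g univ, sum_const_nat card_fiber, mul_comm]

theorem vadd_eq_compl_of_sumFree {G : Type*} [AddGroup G] [Fintype G] [DecidableEq G]
    {H : Finset G} (hfree : ∀ a ∈ H, ∀ b ∈ H, a + b ∉ H) (hhalf : 2 * #H = Fintype.card G)
    {a : G} (ha : a ∈ H) : a +ᵥ H = Hᶜ := by
  refine eq_of_subset_of_card_le (fun z hz ↦ ?_) ?_
  · obtain ⟨b, hb, rfl⟩ := mem_vadd_finset.1 hz
    exact mem_compl.2 (hfree a ha b hb)
  · rw [card_vadd_finset, card_compl]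
    omega

theorem card_vadd_mem_eq_card_filter_product {G α : Type*} [AddGroup G] [AddAction G α] [Fintype G]
    [DecidableEq α] (A : Finset α) (u : α) :
    #{g : G | g +ᵥ u ∈ A} = #{p ∈ (univ : Finset G) ×ˢ A | p.1 +ᵥ p.2 = u} := by
  refine card_nbij' (fun g ↦ (-g, g +ᵥ u)) (fun p ↦ -p.1) ?_ ?_ ?_ ?_
  · intro g hg
    simpa using hg
  · rintro ⟨g, a⟩ hp
    obtain ⟨ha, rfl⟩ : a ∈ A ∧ g +ᵥ a = u := by simpa using hp
    simpa using ha
  · intro g _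
    simp
  · rintro ⟨g, a⟩ hp
    obtain ⟨-, rfl⟩ : a ∈ A ∧ g +ᵥ a = u := by simpa using hp
    simp

theorem vadd_mem_ssubsets_erase_empty_iff {G : Type*} [AddGroup G] [DecidableEq G] {S U : Finset G}
    (hU : U.Nonempty) (hUS : #U < #S) (g : G) : g +ᵥ U ∈ S.ssubsets.erase ∅ ↔ g +ᵥ U ⊆ S := by
  rw [mem_erase, mem_ssubsets]
  refine ⟨fun h ↦ h.2.subset, fun h ↦ ⟨hU.vadd_finset.ne_empty, h.ssubset_of_ne ?_⟩⟩
  exact fun h ↦ hUS.ne (by rw [← h, card_vadd_finset])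

theorem filter_vadd_pair_subset_eq_erase {G : Type*} [AddCommGroup G] [Fintype G] [DecidableEq G]
    {S : Finset G} {g u : G} (hadd : ∀ h ∈ S.erase u, g + h ∈ S) (hu : g + u ∉ S) :
    ({h : G | h +ᵥ ({0, g} : Finset G) ⊆ S} : Finset G) = S.erase u := by
  ext h
  have pair_iff : h +ᵥ ({0, g} : Finset G) ⊆ S ↔ h ∈ S ∧ g + h ∈ S := by
    simp [vadd_finset_def, insert_subset_iff, add_comm]
  rw [mem_filter_univ, pair_iff, mem_erase]
  refine ⟨fun ⟨hh, hgh⟩ ↦ ⟨?_, hh⟩, fun hh ↦ ⟨hh.2, hadd h (mem_erase.2 hh)⟩⟩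
  rintro rfl
  exact hu hgh

theorem card_le_two_of_even_card_translates {G : Type*} [AddCommGroup G] [Fintype G]
    [DecidableEq G] {S : Finset G} (hperiod : ∀ g : G, g +ᵥ S = S → g = 0)
    (heven : ∀ U : Finset G, U.Nonempty → #U < #S → Even #{g : G | g +ᵥ U ⊆ S}) :
    #S ≤ 2 := by
  by_contra! hS
  have even_card : Even #S := by simpa using heven {0} (by simp) (by simp; omega)
  obtain ⟨u, hu⟩ : S.Nonempty := card_pos.1 (by omega)
  have card_erase : #(S.erase u) = #S - 1 := card_erase_of_mem hu
  obtain ⟨g, hg, hg0⟩ : ∃ g ∈ ({g : G | g +ᵥ S.erase u ⊆ S} : Finset G), g ≠ 0 := by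
    have even_erase := heven (S.erase u) (card_pos.1 (by omega)) (by omega)
    have zero_mem : (0 : G) ∈ ({g : G | g +ᵥ S.erase u ⊆ S} : Finset G) := by
      simp [erase_subset]
    have one_lt_card : 1 < #{g : G | g +ᵥ S.erase u ⊆ S} := by
      obtain ⟨c, hc⟩ := even_erase
      have := card_pos.2 ⟨0, zero_mem⟩
      omega
    exact exists_mem_ne one_lt_card 0
  have add_mem : ∀ h ∈ S.erase u, g + h ∈ S := fun h hh ↦
    (mem_filter.1 hg).2 (vadd_mem_vadd_finset hh)
  have add_notMem : g + u ∉ S := by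
    intro hgu
    refine hg0 (hperiod g (eq_of_subset_of_card_le (fun z hz ↦ ?_) (card_vadd_finset g S).ge))
    obtain ⟨h, hh, rfl⟩ := mem_vadd_finset.1 hz
    obtain rfl | hhu := eq_or_ne h u
    exacts [hgu, add_mem h (mem_erase.2 ⟨hhu, hh⟩)]
  have even_pair := heven {0, g} (by simp) (by rw [card_pair hg0.symm]; omega)
  rw [filter_vadd_pair_subset_eq_erase add_mem add_notMem, card_erase] at even_pair
  obtain ⟨a, ha⟩ := even_card
  obtain ⟨b, hb⟩ := even_pair
  omega

end FiniteSets

theorem natCast_card_fiber_eq_zero_of_linearIndependent {R M ι κ : Type*} [Ring R]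
    [AddCommGroup M] [Module R M] [DecidableEq κ] {v : κ → M} (hv : LinearIndependent R v)
    {s : Finset ι} {e : ι → κ} (hsum : ∑ i ∈ s, v (e i) = 0) (u : κ) :
    (#{i ∈ s | e i = u} : R) = 0 := by
  by_cases hu : u ∈ s.image e
  · refine linearIndependent_iff'.1 hv (s.image e) (fun u ↦ (#{i ∈ s | e i = u} : R)) ?_ u hu
    simpa [sum_comp, Nat.cast_smul_eq_nsmul] using hsum
  · simp_all

theorem exists_ne_one_pow_eq_one_of_not_coprime {G : Type*} [Group G] [Finite G] {n : ℕ}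
    (hn : ¬ n.Coprime (Nat.card G)) : ∃ a : G, a ≠ 1 ∧ a ^ n = 1 := by
  obtain ⟨p, hp, hpn, hpG⟩ := Nat.Prime.not_coprime_iff_dvd.1 hn
  have : Fact p.Prime := ⟨hp⟩
  obtain ⟨a, ha⟩ := exists_prime_orderOf_dvd_card' (G := G) p hpG
  refine ⟨a, fun h ↦ hp.ne_one ?_, orderOf_dvd_iff_pow_eq_one.1 (ha ▸ hpn)⟩
  rw [← ha, h, orderOf_one]

section FinitePowers

variable {F : Type*} [Field F] [Fintype F]

theorem linearIndependent_pow_of_lt_card {ι : Type*} {e : ι → ℕ} (he : Function.Injective e)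
    (hlt : ∀ i, e i < Fintype.card F) :
    LinearIndependent F (fun (i : ι) (x : F) ↦ x ^ e i) := by
  classical
  refine linearIndependent_iff'.2 fun s c hc i hi ↦ ?_
  have poly_eq_zero : ∑ i ∈ s, Polynomial.monomial (e i) (c i) = 0 := by
    refine Polynomial.eq_zero_of_natDegree_lt_card_of_eval_eq_zero _ Function.injective_id
      (fun x ↦ ?_) ?_
    · simpa [Polynomial.eval_finsetSum] using congrFun hc x
    · refine Nat.lt_of_le_pred Fintype.card_pos (Polynomial.natDegree_sum_le_of_forall_le _ _ ?_)
      exact fun j _ ↦ (Polynomial.natDegree_monomial_le _).trans (Nat.le_pred_of_lt (hlt j))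
  simpa [Polynomial.finsetSum_coeff, Polynomial.coeff_monomial, he.eq_iff, hi]
    using congrArg (Polynomial.coeff · (e i)) poly_eq_zero

variable (F) in
theorem exists_lt_card_forall_pow_eq (d : ℕ) :
    ∃ n < Fintype.card F, ∀ x : F, x ^ d = x ^ n := by
  induction d using Nat.strong_induction_on with
  | _ d ih =>
    obtain hd | hd := lt_or_ge d (Fintype.card F)
    · exact ⟨d, hd, fun _ ↦ rfl⟩
    · have := Fintype.one_lt_card (α := F)
      obtain ⟨n, hn, hpow⟩ := ih (d - Fintype.card F + 1) (by omega)
      refine ⟨n, hn, fun x ↦ ?_⟩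
      rw [← hpow, ← Nat.sub_add_cancel hd, pow_add, FiniteField.pow_card, Nat.add_sub_cancel,
        pow_succ]

theorem pow_eq_self_of_card_eq_two (hcard : Fintype.card F = 2) {d : ℕ} (hd : d ≠ 0) (x : F) :
    x ^ d = x := by
  have idem : IsIdempotentElem x := by
    rw [IsIdempotentElem, ← sq, ← hcard, FiniteField.pow_card]
  exact idem.pow_eq hd

theorem pow_pow_mod_of_card_eq_pow {q m : ℕ} (hcard : Fintype.card F = q ^ m) (x : F) (n : ℕ) :
    x ^ q ^ (n % m) = x ^ q ^ n := by
  conv_rhs => rw [← Nat.div_add_mod n m, pow_add, pow_mul, pow_mul, ← hcard,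
    FiniteField.pow_card_pow]

theorem sum_pow_two_pow_add_sq_eq_zero [CharP F 2] {m : ℕ} [NeZero m]
    (hcard : Fintype.card F = 2 ^ m) (v : F) :
    ∑ g : ZMod m, (v + v ^ 2) ^ 2 ^ g.val = 0 := by
  have shift : ∑ g : ZMod m, (v ^ 2) ^ 2 ^ g.val = ∑ g : ZMod m, v ^ 2 ^ g.val := by
    rw [← Equiv.sum_comp (Equiv.addRight (1 : ZMod m)) (fun g ↦ v ^ 2 ^ g.val)]
    refine sum_congr rfl fun g _ ↦ ?_
    rw [Equiv.coe_addRight, ZMod.val_add, ZMod.val_one_eq_one_mod, Nat.add_mod_mod,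
      pow_pow_mod_of_card_eq_pow hcard, ← pow_mul, ← pow_succ']
  simp only [add_pow_char_pow, sum_add_distrib, shift, CharTwo.add_self_eq_zero]

end FinitePowers

section BinaryExponent

/-- The natural number whose set of binary digits equal to `1` is `T`. Digit positions live in
`ZMod m` because on `𝔽_{2^m}` the Frobenius map shifts them cyclically. -/
def binaryExponent {m : ℕ} (T : Finset (ZMod m)) : ℕ := ∑ s ∈ T, 2 ^ s.val

variable {m : ℕ}

@[simp]
theorem binaryExponent_empty : binaryExponent (∅ : Finset (ZMod m)) = 0 := rfl

@[simp]
theorem binaryExponent_singleton (s : ZMod m) : binaryExponent {s} = 2 ^ s.val :=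
  sum_singleton _ _

theorem add_one_pow_binaryExponent {R : Type*} [CommSemiring R] [CharP R 2] (x : R)
    (S : Finset (ZMod m)) :
    (x + 1) ^ binaryExponent S = ∑ T ∈ S.powerset, x ^ binaryExponent T := by
  simp only [binaryExponent, ← prod_pow_eq_pow_sum, add_pow_char_pow, one_pow, prod_add_one]

theorem fwdDiff_pow_binaryExponent {R : Type*} [CommRing R] [CharP R 2] {S : Finset (ZMod m)}
    (hS : S.Nonempty) (x : R) :
    1 + Δ_[1] (fun x : R ↦ x ^ binaryExponent S) x =
      ∑ T ∈ S.ssubsets.erase ∅, x ^ binaryExponent T := by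
  have split_full := add_sum_erase S.powerset (fun T ↦ x ^ binaryExponent T) (mem_powerset_self S)
  have split_empty := add_sum_erase S.ssubsets (fun T ↦ x ^ binaryExponent T)
    (empty_mem_ssubsets hS)
  rw [binaryExponent_empty, pow_zero] at split_empty
  rw [fwdDiff, add_one_pow_binaryExponent, ← split_full, add_sub_cancel_left,
    ← ssubsets, ← split_empty, CharTwo.add_cancel_left]

variable [NeZero m]

theorem binaryExponent_eq_sum_map (T : Finset (ZMod m)) :
    binaryExponent T = ∑ i ∈ T.map ⟨ZMod.val, ZMod.val_injective m⟩, 2 ^ i := by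
  rw [sum_map]
  rfl

theorem binaryExponent_injective : Function.Injective (binaryExponent (m := m)) := by
  intro T U h
  rw [binaryExponent_eq_sum_map, binaryExponent_eq_sum_map] at h
  exact map_injective _ (geomSum_injective le_rfl h)

theorem binaryExponent_lt (T : Finset (ZMod m)) : binaryExponent T < 2 ^ m := by
  rw [binaryExponent_eq_sum_map]
  refine Nat.geomSum_lt le_rfl fun i hi ↦ ?_
  obtain ⟨s, -, rfl⟩ := mem_map.1 hi
  exact ZMod.val_lt s

theorem exists_lt_binaryExponent_eq_of_card_eq_two {S : Finset (ZMod m)}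
    (hS : #S = 2) : ∃ j k : ℕ, j < k ∧ binaryExponent S = 2 ^ k + 2 ^ j := by
  obtain ⟨s, t, hst, rfl⟩ := card_eq_two.1 hS
  have sum_eq : binaryExponent {s, t} = 2 ^ s.val + 2 ^ t.val := sum_pair hst
  obtain h | h := lt_or_gt_of_ne ((ZMod.val_injective m).ne hst)
  · exact ⟨s.val, t.val, h, by rw [sum_eq, add_comm]⟩
  · exact ⟨t.val, s.val, h, sum_eq⟩

theorem exists_binaryExponent_eq {n : ℕ} (hn : n < 2 ^ m) :
    ∃ T : Finset (ZMod m), binaryExponent T = n := by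
  have bij : Function.Bijective
      fun T : Finset (ZMod m) ↦ (⟨binaryExponent T, binaryExponent_lt T⟩ : Fin (2 ^ m)) :=
    (Fintype.bijective_iff_injective_and_card _).2
      ⟨fun T U h ↦ binaryExponent_injective (Fin.ext_iff.1 h), by simp [ZMod.card]⟩
  obtain ⟨T, hT⟩ := bij.surjective ⟨n, hn⟩
  exact ⟨T, Fin.ext_iff.1 hT⟩

variable {F : Type*} [Field F] [Fintype F]

theorem linearIndependent_pow_binaryExponent (hcard : Fintype.card F = 2 ^ m) :
    LinearIndependent F (fun (T : Finset (ZMod m)) (x : F) ↦ x ^ binaryExponent T) :=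
  linearIndependent_pow_of_lt_card binaryExponent_injective fun T ↦ hcard ▸ binaryExponent_lt T

theorem pow_binaryExponent_pow_two_pow (hcard : Fintype.card F = 2 ^ m) (T : Finset (ZMod m))
    (g : ZMod m) (x : F) :
    (x ^ binaryExponent T) ^ 2 ^ g.val = x ^ binaryExponent (g +ᵥ T) := by
  rw [binaryExponent, binaryExponent, vadd_finset_def, sum_image (by simp),
    ← prod_pow_eq_pow_sum, ← prod_pow_eq_pow_sum, ← prod_pow]
  refine prod_congr rfl fun s _ ↦ ?_
  rw [vadd_eq_add, ZMod.val_add, pow_pow_mod_of_card_eq_pow hcard, add_comm, pow_add, pow_mul]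

end BinaryExponent

section CharTwo

variable {F : Type*} [Field F] [Fintype F] [DecidableEq F] [CharP F 2]

theorem two_mul_card_image_add_sq :
    2 * #(univ.image fun v : F ↦ v + v ^ 2) = Fintype.card F := by
  refine two_mul_card_image_of_fiber_eq_pair (σ := (· + 1)) (by simp) fun x y ↦ ?_
  have factor : y + y ^ 2 - (x + x ^ 2) = (y - x) * (y - (x + 1)) := by grind
  rw [← sub_eq_zero, factor, mul_eq_zero, sub_eq_zero, sub_eq_zero]

theorem image_add_sq_eq_compl_of_sumFree {H : Finset F} (hfree : ∀ a ∈ H, ∀ b ∈ H, a + b ∉ H)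
    (hhalf : 2 * #H = Fintype.card F) (hone : 1 ∈ H) (hsq : ∀ a ∈ H, a ^ 2 ∈ H) :
    (univ.image fun v : F ↦ v + v ^ 2) = Hᶜ := by
  refine eq_of_subset_of_card_le (fun z hz ↦ ?_) ?_
  · obtain ⟨v, -, rfl⟩ := mem_image.1 hz
    rw [mem_compl]
    by_cases hv : v ∈ H
    · exact hfree v hv _ (hsq v hv)
    · rw [← mem_compl, ← vadd_eq_compl_of_sumFree hfree hhalf hone] at hv
      obtain ⟨w, hw, rfl⟩ := mem_vadd_finset.1 hv
      have translate_invariant : (1 + w) + (1 + w) ^ 2 = w + w ^ 2 := by grind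
      rw [vadd_eq_add, translate_invariant]
      exact hfree w hw _ (hsq w hw)
  · have := two_mul_card_image_add_sq (F := F)
    rw [card_compl]
    omega

end CharTwo

namespace IsCrooked

variable {F : Type*} [Field F] {f : F → F}

theorem injective (hf : IsCrooked f) : Function.Injective f := by
  intro x y hxy
  by_contra hne
  exact hf.2.2 x x x (y - x) (sub_ne_zero.2 (Ne.symm hne)) (by simp [hxy])

theorem map_add_one_ne (hf : IsCrooked f) {a : F} (ha0 : a ≠ 0) (ha1 : a ≠ 1) :
    f (a + 1) ≠ f a + f 1 := by
  simpa [hf.1, add_comm] using (hf.2.1 0 1 a zero_ne_one ha0.symm ha1.symm).symm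

theorem eq_zero_of_vadd_eq_self [Fintype F] {m : ℕ} [NeZero m] (hcard : Fintype.card F = 2 ^ m)
    {S : Finset (ZMod m)} (hf : IsCrooked fun x : F ↦ x ^ binaryExponent S)
    {g : ZMod m} (hg : g +ᵥ S = S) : g = 0 := by
  have frobenius_eq_id (x : F) : x ^ 2 ^ g.val = x := by
    refine hf.injective ?_
    simp only [pow_right_comm x, pow_binaryExponent_pow_two_pow hcard, hg]
  have singleton_eq : ({g} : Finset (ZMod m)) = {0} :=
    (linearIndependent_pow_binaryExponent hcard).injective <| funext fun x ↦ by
      simp [frobenius_eq_id]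
  exact singleton_injective singleton_eq

variable [CharP F 2] {a : F}

theorem fwdDiff_eq_fwdDiff_iff (hf : IsCrooked f) (ha : a ≠ 0) (x y : F) :
    Δ_[a] f y = Δ_[a] f x ↔ y = x ∨ y = x + a := by
  constructor
  · intro h
    by_contra! hne
    refine hf.2.1 x (x + a) y (by simpa) hne.1.symm hne.2.symm ?_
    have sum_eq : x + (x + a) + y = y + a := by grind
    rw [sum_eq]
    grind [fwdDiff]
  · rintro (rfl | rfl)
    · rfl
    · have add_add : x + a + a = x := by grind
      grind [fwdDiff]

theorem fwdDiff_add_fwdDiff_ne (hf : IsCrooked f) (ha : a ≠ 0) (x y z : F) :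
    Δ_[a] f x + Δ_[a] f y ≠ Δ_[a] f z := by
  have := hf.2.2 x y z a ha
  grind [fwdDiff]

theorem two_mul_card_image_fwdDiff [Fintype F] [DecidableEq F] (hf : IsCrooked f) (ha : a ≠ 0) :
    2 * #(univ.image (Δ_[a] f)) = Fintype.card F :=
  two_mul_card_image_of_fiber_eq_pair (σ := (· + a)) (by simpa) (hf.fwdDiff_eq_fwdDiff_iff ha)

theorem exists_add_sq_eq_one_add_fwdDiff [Finite F] (hf : IsCrooked f) (hone : f 1 = 1)
    (hsq : ∀ x, f (x ^ 2) = f x ^ 2) (x : F) : ∃ v : F, v + v ^ 2 = 1 + Δ_[1] f x := by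
  classical
  have := Fintype.ofFinite F
  set H := univ.image (Δ_[1] f)
  have mem_H (y : F) : Δ_[1] f y ∈ H := mem_image_of_mem _ (mem_univ y)
  have sumFree : ∀ a ∈ H, ∀ b ∈ H, a + b ∉ H := by
    simpa [H, eq_comm] using hf.fwdDiff_add_fwdDiff_ne one_ne_zero
  have half : 2 * #H = Fintype.card F := hf.two_mul_card_image_fwdDiff one_ne_zero
  have one_mem : 1 ∈ H := by simpa [fwdDiff, hf.1, hone] using mem_H 0
  have sq_mem : ∀ a ∈ H, a ^ 2 ∈ H := by
    intro a ha
    obtain ⟨y, -, rfl⟩ := mem_image.1 ha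
    have fwdDiff_sq : Δ_[1] f y ^ 2 = Δ_[1] f (y ^ 2) := by
      have add_sq : y ^ 2 + 1 = (y + 1) ^ 2 := by rw [CharTwo.add_sq, one_pow]
      rw [fwdDiff, fwdDiff, add_sq, hsq, hsq, sub_pow_char]
    exact fwdDiff_sq ▸ mem_H _
  have mem_compl : 1 + Δ_[1] f x ∈ Hᶜ :=
    vadd_eq_compl_of_sumFree sumFree half one_mem ▸ vadd_mem_vadd_finset (mem_H x)
  rw [← image_add_sq_eq_compl_of_sumFree sumFree half one_mem sq_mem] at mem_compl
  simpa using mem_compl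

section Power

variable {m : ℕ} [Fintype F]

theorem sum_pow_two_pow_one_add_fwdDiff_eq_zero [NeZero m] (hcard : Fintype.card F = 2 ^ m)
    {d : ℕ} (hf : IsCrooked fun x : F ↦ x ^ d) (x : F) :
    ∑ g : ZMod m, (1 + Δ_[1] (fun x : F ↦ x ^ d) x) ^ 2 ^ g.val = 0 := by
  obtain ⟨v, hv⟩ := hf.exists_add_sq_eq_one_add_fwdDiff (one_pow d) (fun x ↦ pow_right_comm x 2 d) x
  rw [← hv, sum_pow_two_pow_add_sq_eq_zero hcard]

theorem coprime_sub_of_pow_two_pow_add (hcard : Fintype.card F = 2 ^ m) {j k : ℕ} (hjk : j ≤ k)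
    (hf : IsCrooked fun x : F ↦ x ^ (2 ^ k + 2 ^ j)) : Nat.Coprime (k - j) m := by
  classical
  by_contra hgcd
  have units_not_coprime : ¬ Nat.Coprime (2 ^ (k - j) - 1) (Nat.card Fˣ) := by
    rw [Nat.card_eq_fintype_card, Fintype.card_units, hcard, Nat.Coprime,
      Nat.pow_sub_one_gcd_pow_sub_one]
    intro h
    exact hgcd (Nat.pow_right_injective le_rfl (show 2 ^ _ = 2 ^ 1 by omega))
  obtain ⟨a, ha1, hapow⟩ := exists_ne_one_pow_eq_one_of_not_coprime units_not_coprime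
  have frobenius_eq : (a : F) ^ 2 ^ k = (a : F) ^ 2 ^ j := by
    have fixed : (a : F) ^ 2 ^ (k - j) = a := by
      rw [← Units.val_pow_eq_pow_val, ← Nat.sub_add_cancel (Nat.one_le_two_pow (n := k - j)),
        pow_succ, hapow, one_mul]
    rw [← Nat.sub_add_cancel hjk, pow_add, pow_mul, fixed]
  refine hf.map_add_one_ne a.ne_zero (by simpa using ha1) ?_
  simp only [pow_add, add_pow_char_pow, one_pow, frobenius_eq]
  grind

variable {S : Finset (ZMod m)}

theorem one_lt_card_digits (hF : 2 < Fintype.card F)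
    (hf : IsCrooked fun x : F ↦ x ^ binaryExponent S) : 1 < #S := by
  by_contra! hS
  obtain hS | hS : #S = 0 ∨ #S = 1 := by omega
  · rw [card_eq_zero.1 hS] at hf
    simpa using hf.1
  · classical
    obtain ⟨s, rfl⟩ := card_eq_one.1 hS
    obtain ⟨a, -, ha⟩ : ∃ a ∈ (univ : Finset F), a ∉ ({0, 1} : Finset F) :=
      exists_mem_notMem_of_card_lt_card (by simpa [card_pair] using hF)
    simp only [mem_insert, mem_singleton, not_or] at ha
    refine hf.map_add_one_ne ha.1 ha.2 ?_
    simp only [binaryExponent_singleton, add_pow_char_pow]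

variable [NeZero m]

theorem sum_pow_binaryExponent_vadd_eq_zero (hcard : Fintype.card F = 2 ^ m)
    (hf : IsCrooked fun x : F ↦ x ^ binaryExponent S) (hS : S.Nonempty) :
    ∑ p ∈ (univ : Finset (ZMod m)) ×ˢ S.ssubsets.erase ∅,
      (fun x : F ↦ x ^ binaryExponent (p.1 +ᵥ p.2)) = 0 := by
  ext x
  rw [Finset.sum_apply, Pi.zero_apply, sum_product,
    ← hf.sum_pow_two_pow_one_add_fwdDiff_eq_zero hcard x]
  refine sum_congr rfl fun g _ ↦ ?_
  rw [fwdDiff_pow_binaryExponent hS, sum_pow_char_pow]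
  simp only [pow_binaryExponent_pow_two_pow hcard]

theorem even_card_translates (hcard : Fintype.card F = 2 ^ m)
    (hf : IsCrooked fun x : F ↦ x ^ binaryExponent S) {U : Finset (ZMod m)}
    (hU : U.Nonempty) (hUS : #U < #S) : Even #{g : ZMod m | g +ᵥ U ⊆ S} := by
  have hS : S.Nonempty := card_pos.1 (hU.card_pos.trans hUS)
  have cast_eq_zero := natCast_card_fiber_eq_zero_of_linearIndependent (M := F → F)
    (linearIndependent_pow_binaryExponent hcard)
    (hf.sum_pow_binaryExponent_vadd_eq_zero hcard hS) U
  rw [← card_vadd_mem_eq_card_filter_product, CharP.cast_eq_zero_iff F 2,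
    ← even_iff_two_dvd] at cast_eq_zero
  simpa only [vadd_mem_ssubsets_erase_empty_iff hU hUS] using cast_eq_zero

theorem card_digits_eq_two (hcard : Fintype.card F = 2 ^ m) (hF : 2 < Fintype.card F)
    (hf : IsCrooked fun x : F ↦ x ^ binaryExponent S) : #S = 2 :=
  le_antisymm
    (card_le_two_of_even_card_translates (fun _ ↦ hf.eq_zero_of_vadd_eq_self hcard)
      fun _ ↦ hf.even_card_translates hcard)
    (hf.one_lt_card_digits hF)

end Power

end IsCrooked

/-- Every crooked power function on `𝔽_{2^m}` (`m` odd) has the form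
`x ↦ x^(2^k + 2^j)` with `j < k` and `gcd (k - j) m = 1`. -/
theorem crooked_power_function_form {m : ℕ} (hm : 0 < m) (hmodd : Odd m)
    {F : Type*} [Field F] [Fintype F] (hcard : Fintype.card F = 2 ^ m)
    (d : ℕ) (hd : 0 < d) (hf : IsCrooked (fun x : F => x ^ d)) :
    ∃ j k : ℕ, j < k ∧ Nat.gcd (k - j) m = 1 ∧
      ∀ x : F, x ^ d = x ^ (2 ^ k + 2 ^ j) := by
  have : NeZero m := ⟨hm.ne'⟩
  have : CharP F 2 := charP_of_card_eq_prime_pow hcard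
  obtain rfl | hm1 := (Nat.succ_le_of_lt hm).eq_or_lt
  · refine ⟨0, 1, one_pos, Nat.gcd_one_right _, fun x ↦ ?_⟩
    rw [pow_eq_self_of_card_eq_two hcard hd.ne', pow_eq_self_of_card_eq_two hcard (by simp)]
  have hF : 2 < Fintype.card F := hcard ▸ Nat.pow_lt_pow_right one_lt_two hm1
  obtain ⟨n, hn, hdn⟩ := exists_lt_card_forall_pow_eq F d
  obtain ⟨S, rfl⟩ := exists_binaryExponent_eq (hcard ▸ hn)
  have hfS : IsCrooked fun x : F ↦ x ^ binaryExponent S := by simpa only [hdn] using hf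
  obtain ⟨j, k, hjk, hS⟩ :=
    exists_lt_binaryExponent_eq_of_card_eq_two (hfS.card_digits_eq_two hcard hF)
  rw [hS] at hfS
  exact ⟨j, k, hjk, hfS.coprime_sub_of_pow_two_pow_add hcard hjk.le, fun x ↦ by rw [hdn, hS]⟩
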